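/- The derivatives of w of all orders k with 1 ≤ k ≤ p − 1 vanish at the endpoints: the k-th iterated derivative of w at τ = 0 equals 0 and the k-th iterated derivative of w at τ = 2π equals 0, for every integer k with 1 ≤ k ≤ p − 1. -/

import Mathlib

/-!
Since `v τ + v (2π - τ) = 1 > 0`, the denominator `v τ ^ p + v (2π - τ) ^ p` is positive on all of
`ℝ`. As `v 0 = 0`, the function `w` is the `p`-th power of an analytic function vanishing at `0`
times an analytic function, so its derivatives of order less than `p` vanish at `0`. The symmetry
`w (2π - τ) = 2π - w τ` carries this over to `2π`, except in order zero.
-/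

open Real

/-- The function `v` from equation (colt_kress_2), depending on an integer parameter `p`. -/
noncomputable def vCK (p : ℕ) (τ : ℝ) : ℝ :=
  (1 / (p : ℝ) - 1 / 2) * ((π - τ) / π) ^ 3 + (1 / (p : ℝ)) * ((τ - π) / π) + 1 / 2

/-- The Colton–Kress change of variables `w` from equation (colt_kress_1). -/
noncomputable def wCK (p : ℕ) (τ : ℝ) : ℝ :=
  2 * π * (vCK p τ) ^ p / ((vCK p τ) ^ p + (vCK p (2 * π - τ)) ^ p)

theorem natCast_le_analyticOrderAt_pow_smul {𝕜 E : Type*} [NontriviallyNormedField 𝕜]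
    [NormedAddCommGroup E] [NormedSpace 𝕜 E] {f : 𝕜 → 𝕜} {g : 𝕜 → E} {x : 𝕜}
    (hf : AnalyticAt 𝕜 f x) (hg : AnalyticAt 𝕜 g x) (hfx : f x = 0) (n : ℕ) :
    (n : ℕ∞) ≤ analyticOrderAt (f ^ n • g) x := by
  have one_le_order : 1 ≤ analyticOrderAt f x :=
    Order.one_le_iff_ne_zero.2 (hf.analyticOrderAt_ne_zero.2 hfx)
  calc (n : ℕ∞) = n • 1 := by simp
    _ ≤ n • analyticOrderAt f x := nsmul_le_nsmul_right one_le_order n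
    _ ≤ n • analyticOrderAt f x + analyticOrderAt g x := le_self_add
    _ = analyticOrderAt (f ^ n • g) x := by
      rw [analyticOrderAt_smul (hf.pow n) hg, analyticOrderAt_pow hf]

theorem iteratedDeriv_pow_smul_eq_zero {𝕜 E : Type*} [NontriviallyNormedField 𝕜] [CharZero 𝕜]
    [NormedAddCommGroup E] [NormedSpace 𝕜 E] [CompleteSpace E]
    {f : 𝕜 → 𝕜} {g : 𝕜 → E} {x : 𝕜} {k n : ℕ}
    (hf : AnalyticAt 𝕜 f x) (hg : AnalyticAt 𝕜 g x) (hfx : f x = 0) (hk : k < n) :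
    iteratedDeriv k (f ^ n • g) x = 0 :=
  (natCast_le_analyticOrderAt_iff_iteratedDeriv_eq_zero ((hf.pow n).smul hg)).1
    (natCast_le_analyticOrderAt_pow_smul hf hg hfx n) k hk

theorem pow_add_pow_pos_of_add_pos {R : Type*} [Ring R] [LinearOrder R] [IsStrictOrderedRing R]
    {a b : R} (h : 0 < a + b) (n : ℕ) : 0 < a ^ n + b ^ n := by
  rcases n.even_or_odd with hn | hn
  · have pos_or_pos : 0 < a ∨ 0 < b := lt_or_lt_of_add_lt_add (by rwa [add_zero])
    rcases pos_or_pos with ha | hb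
    · exact add_pos_of_pos_of_nonneg (pow_pos ha n) (hn.pow_nonneg b)
    · exact add_pos_of_nonneg_of_pos (hn.pow_nonneg a) (pow_pos hb n)
  · have neg_pow_lt : (-b) ^ n < a ^ n := hn.strictMono_pow (neg_lt_iff_pos_add.2 h)
    rwa [hn.neg_pow, neg_lt_iff_pos_add] at neg_pow_lt

theorem vCK_zero (p : ℕ) : vCK p 0 = 0 := by
  simp only [vCK, sub_zero, zero_sub, neg_div, div_self pi_ne_zero]
  ring

theorem vCK_add_vCK_two_pi_sub (p : ℕ) (τ : ℝ) : vCK p τ + vCK p (2 * π - τ) = 1 := by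
  unfold vCK
  ring

@[fun_prop]
theorem analyticAt_vCK (p : ℕ) (τ : ℝ) : AnalyticAt ℝ (vCK p) τ := by
  unfold vCK
  simp only [div_eq_mul_inv]
  fun_prop

theorem vCK_pow_add_vCK_two_pi_sub_pow_pos (p n : ℕ) (τ : ℝ) :
    0 < vCK p τ ^ n + vCK p (2 * π - τ) ^ n :=
  pow_add_pow_pos_of_add_pos (by simp [vCK_add_vCK_two_pi_sub]) n

theorem wCK_two_pi_sub (p : ℕ) (τ : ℝ) : wCK p (2 * π - τ) = 2 * π - wCK p τ := by
  have denom_ne_zero := (vCK_pow_add_vCK_two_pi_sub_pow_pos p p τ).ne'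
  rw [wCK, wCK, sub_sub_cancel, add_comm (vCK p (2 * π - τ) ^ p)]
  field_simp
  ring

theorem iteratedDeriv_wCK_zero {p k : ℕ} (hk : k < p) : iteratedDeriv k (wCK p) 0 = 0 := by
  have wCK_eq : wCK p =
      vCK p ^ p • fun τ => 2 * π / (vCK p τ ^ p + vCK p (2 * π - τ) ^ p) := by
    ext τ
    simp only [wCK, Pi.smul_apply', Pi.pow_apply, smul_eq_mul]
    ring
  have analyticAt_cofactor :
      AnalyticAt ℝ (fun τ => 2 * π / (vCK p τ ^ p + vCK p (2 * π - τ) ^ p)) 0 := by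
    fun_prop (disch := exact (vCK_pow_add_vCK_two_pi_sub_pow_pos p p 0).ne')
  rw [wCK_eq]
  exact iteratedDeriv_pow_smul_eq_zero (analyticAt_vCK p 0) analyticAt_cofactor (vCK_zero p) hk

theorem iteratedDeriv_wCK_two_pi_sub (p : ℕ) {k : ℕ} (hk : 0 < k) (τ : ℝ) :
    iteratedDeriv k (wCK p) (2 * π - τ) = -(-1) ^ k * iteratedDeriv k (wCK p) τ := by
  have wCK_eq : wCK p = fun σ => 2 * π - wCK p (2 * π - σ) := by
    ext σ
    rw [wCK_two_pi_sub, sub_sub_cancel]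
  conv_lhs => rw [wCK_eq]
  rw [iteratedDeriv_const_sub hk, iteratedDeriv_neg, iteratedDeriv_comp_const_sub]
  simp

theorem wCK_iteratedDeriv_vanish_at_endpoints (p : ℕ) (hp : 2 ≤ p) :
    ∀ k : ℕ, 1 ≤ k → k ≤ p - 1 →
      iteratedDeriv k (wCK p) 0 = 0 ∧ iteratedDeriv k (wCK p) (2 * π) = 0 := by
  intro k hk hkp
  have deriv_zero : iteratedDeriv k (wCK p) 0 = 0 := iteratedDeriv_wCK_zero (by omega)
  refine ⟨deriv_zero, ?_⟩
  simpa [deriv_zero] using iteratedDeriv_wCK_two_pi_sub p hk 0
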